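/- Let Γ be an infinite additive abelian group that is neither a torsion group nor torsion-free (Γ contains an element of infinite additive order and a nonzero element of finite additive order). Let T be a finite tree of diameter 4 with central vertex v_c (the unique vertex with dist(v_c, u) ≤ 2 for every vertex u). Then T is Γ-vertex magic if and only if one of the following holds: (i) every non-pendant vertex of T is a strong support vertex; (ii) v_c is a weak support vertex and every non-pendant vertex other than v_c is a strong support vertex; (iii) v_c is a neutral vertex and there exists g ∈ Γ, g ≠ 0, with ((deg(v_c) : ℤ) − 1) • g = 0. -/

import Mathlib

/-!
Every vertex at distance 2 from the centre `vc` is pendant, so each non-pendant vertex `x ≠ vc` is a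
support vertex adjacent to `vc` whose neighbours other than `vc` are all pendant, and there are
`m ≥ 2` such vertices.

In a magic labeling the weight of a pendant vertex is the label of its neighbour, so all support
vertices carry the label `μ`, and `μ ≠ 0`. If `vc` is neutral, its weight is `deg vc • μ`, which
forces `(deg vc - 1) • μ = 0`. If `vc` is a support vertex, then the pendant vertices at each other
non-pendant vertex have label sum `0`, so there are at least two of them.

Conversely, put `μ` on all non-pendant vertices `x ≠ vc` and `c` on `vc`. It remains to prescribe
the label sum of the pendant neighbours: `μ - c` at each `x`, and `μ - m • μ` at `vc`. By
`exists_nonzero_sum_eq` two or more nonzero labels can have any sum, while one label can have any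
nonzero sum; `exists_labeling` assembles these choices. For a neutral centre take `μ = g` and
`c ∉ {0, g}`; for a support centre take `c = μ` of infinite order, so that `μ - m • μ ≠ 0`.
-/

/-- Over an infinite group, nonzero labels on a finite set can have any prescribed sum, except
that the sum is `0` over the empty set and nonzero over a single point. -/
lemma exists_nonzero_sum_eq {V Γ : Type*} [AddCommGroup Γ] [Infinite Γ]
    (s : Finset V) (t : Γ) (h0 : s.card = 0 → t = 0) (h1 : s.card = 1 → t ≠ 0) :
    ∃ f : V → Γ, (∀ v, f v ≠ 0) ∧ ∑ v ∈ s, f v = t := by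
  classical
  obtain ⟨c, hc⟩ := exists_ne (0 : Γ)
  rcases Nat.lt_trichotomy s.card 1 with h | h | h
  · have hs : s.card = 0 := by omega
    refine ⟨fun _ => c, fun _ => hc, ?_⟩
    rw [Finset.card_eq_zero.mp hs, h0 hs]
    simp
  · obtain ⟨a, rfl⟩ := Finset.card_eq_one.mp h
    exact ⟨fun _ => t, fun _ => h1 h, by simp⟩
  · obtain ⟨a, ha, b, hb, hab⟩ := Finset.one_lt_card.mp h
    -- Use `c` off `{a, b}`; then `x` and `r - x` at `a` and `b`, where `x ∉ {0, r}`.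
    let r : Γ := t - ∑ v ∈ (s.erase a).erase b, c
    obtain ⟨x, hx⟩ := Infinite.exists_notMem_finset ({0, r} : Finset Γ)
    simp only [Finset.mem_insert, Finset.mem_singleton, not_or] at hx
    refine ⟨fun v => if v = a then x else if v = b then r - x else c, ?_, ?_⟩
    · intro v
      dsimp only
      split_ifs
      · exact hx.1
      · exact sub_ne_zero.mpr (Ne.symm hx.2)
      · exact hc
    · have hb' : b ∈ s.erase a := Finset.mem_erase.mpr ⟨hab.symm, hb⟩
      rw [← Finset.add_sum_erase s _ ha, ← Finset.add_sum_erase _ _ hb']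
      have hrest : ∑ v ∈ (s.erase a).erase b,
          (if v = a then x else if v = b then r - x else c) =
          ∑ v ∈ (s.erase a).erase b, c := by
        refine Finset.sum_congr rfl fun v hv => ?_
        simp only [Finset.mem_erase] at hv
        rw [if_neg hv.2.1, if_neg hv.1]
      rw [hrest]
      simp only [if_true, if_neg hab.symm, r]
      abel

section Structure

variable {V : Type*} {T : SimpleGraph V}

lemma not_adj_of_common_neighbor (hT : T.IsTree) {a b c : V} (hab : T.Adj a b)
    (hac : T.Adj a c) : ¬ T.Adj b c := by
  intro hbc
  apply hT.dist_ne_of_adj a hbc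
  rw [SimpleGraph.dist_eq_one_iff_adj.mpr hab, SimpleGraph.dist_eq_one_iff_adj.mpr hac]

/-- Two distinct vertices of a tree have at most one common neighbour. -/
lemma eq_of_common_neighbors (hT : T.IsTree) {a b y z : V} (hne : a ≠ b) (hay : T.Adj a y)
    (hyb : T.Adj y b) (haz : T.Adj a z) (hzb : T.Adj z b) : y = z := by
  have hpath : ∀ w (h₁ : T.Adj a w) (h₂ : T.Adj w b),
      (SimpleGraph.Walk.cons h₁ (SimpleGraph.Walk.cons h₂ SimpleGraph.Walk.nil)).IsPath := by
    intro w h₁ h₂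
    simp [SimpleGraph.Walk.cons_isPath_iff, h₁.ne, h₂.ne, hne]
  have h := (hT.existsUnique_path a b).unique (hpath y hay hyb) (hpath z haz hzb)
  simpa using congrArg SimpleGraph.Walk.snd h

lemma exists_mid_of_dist_le_two (hT : T.IsTree) {a b : V} (h : T.dist a b ≤ 2) (hne : a ≠ b)
    (hadj : ¬ T.Adj a b) : ∃ y, T.Adj a y ∧ T.Adj y b := by
  obtain ⟨p, hp⟩ := hT.connected.exists_walk_length_eq_dist a b
  rw [← hp] at h
  match p, h with
  | .nil, _ => exact absurd rfl hne
  | .cons h₁ .nil, _ => exact absurd h₁ hadj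
  | .cons h₁ (.cons h₂ .nil), _ => exact ⟨_, h₁, h₂⟩
  | .cons _ (.cons _ (.cons _ q)), h => simp at h

variable [Fintype V] [DecidableRel T.Adj]

lemma degree_eq_one_of_far (hT : T.IsTree) {vc : V} (hvc : ∀ u : V, T.dist vc u ≤ 2) {x : V}
    (hne : x ≠ vc) (hadj : ¬ T.Adj vc x) : T.degree x = 1 := by
  obtain ⟨y, hy₁, hy₂⟩ := exists_mid_of_dist_le_two hT (hvc x) hne.symm hadj
  rw [SimpleGraph.degree_eq_one_iff_existsUnique_adj]
  refine ⟨y, hy₂.symm, fun z hz => ?_⟩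
  -- A neighbour `z` of `x` is adjacent to `vc`; otherwise it would be at the same distance 2.
  have hzvc : z ≠ vc := by
    rintro rfl
    exact hadj hz.symm
  have hd : ∀ w, w ≠ vc → ¬ T.Adj vc w → T.dist vc w = 2 := by
    intro w hw hw'
    have := hT.connected.one_lt_dist_of_ne_of_not_adj hw.symm hw'
    have := hvc w
    omega
  have hz' : T.Adj vc z := by
    by_contra hcon
    exact hT.dist_ne_of_adj vc hz ((hd x hne hadj).trans (hd z hzvc hcon).symm)
  exact (eq_of_common_neighbors hT hne.symm hz' hz.symm hy₁ hy₂)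

lemma degree_eq_one_of_adj_of_adj (hT : T.IsTree) {vc : V} (hvc : ∀ u : V, T.dist vc u ≤ 2)
    {x y : V} (hx : T.Adj vc x) (hxy : T.Adj x y) (hy : y ≠ vc) : T.degree y = 1 :=
  degree_eq_one_of_far hT hvc hy (not_adj_of_common_neighbor hT hx.symm hxy)

/-- Diameter 4 forces two distinct non-pendant neighbours of the centre. -/
lemma exists_two_nonpendant (hT : T.IsTree) {vc : V} (hvc : ∀ u : V, T.dist vc u ≤ 2)
    (h4 : ∃ a b : V, T.dist a b = 4) :
    ∃ p q, p ≠ q ∧ T.Adj vc p ∧ T.Adj vc q ∧ T.degree p ≠ 1 ∧ T.degree q ≠ 1 := by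
  obtain ⟨a, b, hab⟩ := h4
  have htri := hT.connected.dist_triangle (u := a) (v := vc) (w := b)
  rw [hab, T.dist_comm (u := a)] at htri
  have hmid : ∀ w, T.dist vc w = 2 → ∃ y, T.Adj vc y ∧ T.Adj y w ∧ T.degree y ≠ 1 := by
    intro w hw
    have hne : vc ≠ w := by
      rintro rfl
      simp at hw
    have hadj : ¬ T.Adj vc w := by
      intro h
      rw [SimpleGraph.dist_eq_one_iff_adj.mpr h] at hw
      omega
    obtain ⟨y, hy₁, hy₂⟩ := exists_mid_of_dist_le_two hT (hvc w) hne hadj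
    refine ⟨y, hy₁, hy₂, fun hdeg => hne ?_⟩
    exact (SimpleGraph.degree_eq_one_iff_existsUnique_adj.mp hdeg).unique hy₁.symm hy₂
  have ha := hvc a
  have hb := hvc b
  obtain ⟨p, hp, hpa, hpd⟩ := hmid a (by omega)
  obtain ⟨q, hq, hqb, hqd⟩ := hmid b (by omega)
  refine ⟨p, q, ?_, hp, hq, hpd, hqd⟩
  rintro rfl
  have := hT.connected.dist_triangle (u := a) (v := p) (w := b)
  rw [hab, SimpleGraph.dist_eq_one_iff_adj.mpr hpa.symm,
    SimpleGraph.dist_eq_one_iff_adj.mpr hqb] at this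
  omega

lemma degree_ne_one_of_two_adj {x p q : V} (hpq : p ≠ q) (hp : T.Adj x p) (hq : T.Adj x q) :
    T.degree x ≠ 1 := fun h =>
  hpq ((SimpleGraph.degree_eq_one_iff_existsUnique_adj.mp h).unique hp hq)

lemma exists_pendant_neighbor (hT : T.IsTree) {vc : V} (hvc : ∀ u : V, T.dist vc u ≤ 2) {x : V}
    (hx : x ≠ vc) (hd : T.degree x ≠ 1) : ∃ u, T.Adj x u ∧ T.degree u = 1 := by
  have hadj : T.Adj vc x := by
    by_contra h
    exact hd (degree_eq_one_of_far hT hvc hx h)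
  by_contra! hcon
  refine hd (SimpleGraph.degree_eq_one_iff_existsUnique_adj.mpr ⟨vc, hadj.symm, fun y hy => ?_⟩)
  by_contra hne
  exact hcon y hy (degree_eq_one_of_adj_of_adj hT hvc hadj hy hne)

variable (T) in
/-- The pendant neighbours of `x`. -/
def pendants (x : V) : Finset V := (T.neighborFinset x).filter fun u => T.degree u = 1

variable (T) in
/-- The non-pendant neighbours of `x`. -/
def nonpendants (x : V) : Finset V := (T.neighborFinset x).filter fun u => ¬ T.degree u = 1

lemma mem_pendants {x u : V} : u ∈ pendants T x ↔ T.Adj x u ∧ T.degree u = 1 := by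
  simp [pendants]

lemma mem_nonpendants {x u : V} : u ∈ nonpendants T x ↔ T.Adj x u ∧ ¬ T.degree u = 1 := by
  simp [nonpendants]

lemma weight_eq {Γ : Type*} [AddCommGroup Γ] (ℓ : V → Γ) (x : V) :
    ∑ u ∈ T.neighborFinset x, ℓ u = ∑ u ∈ pendants T x, ℓ u + ∑ u ∈ nonpendants T x, ℓ u :=
  (Finset.sum_filter_add_sum_filter_not _ _ _).symm

lemma one_lt_card_pendants_iff {x : V} : 1 < (pendants T x).card ↔
    ∃ a b : V, a ≠ b ∧ T.Adj x a ∧ T.Adj x b ∧ T.degree a = 1 ∧ T.degree b = 1 := by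
  simp only [Finset.one_lt_card, mem_pendants]
  constructor
  · rintro ⟨a, ⟨ha, ha'⟩, b, ⟨hb, hb'⟩, hab⟩
    exact ⟨a, b, hab, ha, hb, ha', hb'⟩
  · rintro ⟨a, b, hab, ha, hb, ha', hb'⟩
    exact ⟨a, ⟨ha, ha'⟩, b, ⟨hb, hb'⟩, hab⟩

lemma card_pendants_eq_one_iff {x : V} :
    (pendants T x).card = 1 ↔ ∃! u : V, T.Adj x u ∧ T.degree u = 1 := by
  rw [Finset.card_eq_one]
  simp only [Finset.eq_singleton_iff_unique_mem, mem_pendants]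
  rfl

lemma card_pendants_eq_zero_iff {x : V} :
    (pendants T x).card = 0 ↔ ¬ ∃ u : V, T.Adj x u ∧ T.degree u = 1 := by
  rw [Finset.card_eq_zero, Finset.eq_empty_iff_forall_notMem]
  simp only [mem_pendants, not_exists]

lemma nonpendants_eq_singleton (hT : T.IsTree) {vc : V} (hvc : ∀ u : V, T.dist vc u ≤ 2)
    (hc : T.degree vc ≠ 1) {x : V} (hx : x ≠ vc) (hd : T.degree x ≠ 1) : nonpendants T x = {vc} := by
  have hadj : T.Adj vc x := by
    by_contra h
    exact hd (degree_eq_one_of_far hT hvc hx h)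
  ext y
  rw [mem_nonpendants, Finset.mem_singleton]
  constructor
  · rintro ⟨hy, hy'⟩
    by_contra hne
    exact hy' (degree_eq_one_of_adj_of_adj hT hvc hadj hy hne)
  · rintro rfl
    exact ⟨hadj.symm, hc⟩

lemma degree_ne_one_of_adj_pendant (hT : T.IsTree) {vc : V} (hvc : ∀ u : V, T.dist vc u ≤ 2)
    (hc : T.degree vc ≠ 1) {u x : V} (hu : T.degree u = 1) (hux : T.Adj u x) :
    T.degree x ≠ 1 := by
  intro hx
  have hxc : x ≠ vc := by
    rintro rfl
    exact hc hx
  have huc : u ≠ vc := by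
    rintro rfl
    exact hc hu
  have huniq : ∀ {a b c : V}, T.degree a = 1 → T.Adj a b → T.Adj a c → b = c :=
    fun ha => (SimpleGraph.degree_eq_one_iff_existsUnique_adj.mp ha).unique
  -- Then `{u, x}` would be a whole component, although `vc` lies outside it.
  by_cases hau : T.Adj vc u
  · exact hxc (huniq hu hux hau.symm)
  · obtain ⟨y, hy₁, hy₂⟩ := exists_mid_of_dist_le_two hT (hvc u) huc.symm hau
    obtain rfl := huniq hu hux hy₂.symm
    exact huc (huniq hx hux.symm hy₁.symm)

/-- Labels `μ` on the non-pendant vertices `x ≠ vc` and `c` on `vc` extend to a magic labeling as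
soon as the sums required of the pendant neighbours are attainable. -/
lemma exists_labeling {Γ : Type*} [AddCommGroup Γ] [Infinite Γ] (hT : T.IsTree) {vc : V}
    (hvc : ∀ u : V, T.dist vc u ≤ 2) (hdc : T.degree vc ≠ 1) (c μ : Γ) (hc : c ≠ 0) (hμ : μ ≠ 0)
    (hsupp : (pendants T vc).card ≠ 0 → c = μ)
    (hx : ∀ x, x ≠ vc → T.degree x ≠ 1 → (pendants T x).card = 1 → μ - c ≠ 0)
    (h0 : (pendants T vc).card = 0 → μ - (nonpendants T vc).card • μ = 0)
    (h1 : (pendants T vc).card = 1 → μ - (nonpendants T vc).card • μ ≠ 0) :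
    ∃ (ℓ : V → Γ) (μ : Γ), (∀ w, ℓ w ≠ 0) ∧ ∀ w, ∑ x ∈ T.neighborFinset w, ℓ x = μ := by
  classical
  -- `f x` labels the pendant neighbours of `x`.
  have hf : ∀ x, ∃ f : V → Γ, (∀ v, f v ≠ 0) ∧ (T.degree x ≠ 1 → ∑ v ∈ pendants T x, f v =
      if x = vc then μ - (nonpendants T vc).card • μ else μ - c) := by
    intro x
    by_cases hd : T.degree x = 1
    · exact ⟨fun _ => c, fun _ => hc, fun h => absurd hd h⟩
    obtain ⟨f, hf, hf'⟩ := exists_nonzero_sum_eq (pendants T x)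
      (if x = vc then μ - (nonpendants T vc).card • μ else μ - c) (by
        intro h
        split_ifs with hxc
        · subst hxc
          exact h0 h
        · exact absurd (exists_pendant_neighbor hT hvc hxc hd)
            (card_pendants_eq_zero_iff.mp h)) (by
        intro h
        split_ifs with hxc
        · subst hxc
          exact h1 h
        · exact hx x hxc hd h)
    exact ⟨f, hf, fun _ => hf'⟩
  choose f hf0 hfsum using hf
  -- `s u` is the unique neighbour of a pendant vertex `u`.
  have hs : ∀ u, ∃ s, T.degree u = 1 → T.Adj u s ∧ ∀ y, T.Adj u y → y = s := by
    intro u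
    by_cases hd : T.degree u = 1
    · obtain ⟨s, hs⟩ := SimpleGraph.degree_eq_one_iff_existsUnique_adj.mp hd
      exact ⟨s, fun _ => hs⟩
    · exact ⟨u, fun h => absurd h hd⟩
  choose s hs using hs
  let ℓ : V → Γ := fun u => if T.degree u = 1 then f (s u) u else if u = vc then c else μ
  have hℓ1 : ∀ u, T.degree u = 1 → ℓ u = f (s u) u := fun u h => if_pos h
  have hℓc : ℓ vc = c := by simp [ℓ, hdc]
  have hℓμ : ∀ u, T.degree u ≠ 1 → u ≠ vc → ℓ u = μ := fun u h h' => by simp [ℓ, h, h']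
  have hpend : ∀ x, ∑ u ∈ pendants T x, ℓ u = ∑ u ∈ pendants T x, f x u := by
    intro x
    refine Finset.sum_congr rfl fun u hu => ?_
    obtain ⟨hxu, hu⟩ := mem_pendants.mp hu
    rw [hℓ1 u hu, ← (hs u hu).2 x hxu.symm]
  refine ⟨ℓ, μ, ?_, ?_⟩
  · intro w
    dsimp only [ℓ]
    split_ifs
    · exact hf0 _ _
    · exact hc
    · exact hμ
  · intro w
    by_cases hd : T.degree w = 1
    · have hN : T.neighborFinset w = {s w} := by
        ext y
        rw [SimpleGraph.mem_neighborFinset, Finset.mem_singleton]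
        refine ⟨(hs w hd).2 y, ?_⟩
        rintro rfl
        exact (hs w hd).1
      rw [hN, Finset.sum_singleton]
      by_cases hsc : s w = vc
      · rw [hsc, hℓc]
        apply hsupp
        have hw : w ∈ pendants T vc := mem_pendants.mpr ⟨hsc ▸ (hs w hd).1.symm, hd⟩
        exact Finset.card_ne_zero_of_mem hw
      · exact hℓμ _ (degree_ne_one_of_adj_pendant hT hvc hdc hd (hs w hd).1) hsc
    · rw [weight_eq, hpend, hfsum w hd]
      by_cases hwc : w = vc
      · subst hwc
        rw [if_pos rfl, Finset.sum_congr rfl (g := fun _ => μ), Finset.sum_const, sub_add_cancel]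
        intro u hu
        obtain ⟨hu, hu'⟩ := mem_nonpendants.mp hu
        exact hℓμ u hu' hu.ne'
      · rw [if_neg hwc, nonpendants_eq_singleton hT hvc hdc hwc hd, Finset.sum_singleton, hℓc,
          sub_add_cancel]

end Structure

/-- Let `Γ` be an infinite abelian group which is neither torsion nor
torsion-free (it has an element of infinite order and a nonzero element of finite
order) and `T` a finite tree of diameter 4 with central vertex `vc`. Then `T` is
`Γ`-vertex magic iff (i) every non-pendant vertex is a strong support vertex; or
(ii) `vc` is a weak support vertex and every other non-pendant vertex is a strong
support vertex; or (iii) `vc` is neutral and there is `g ≠ 0` with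
`((deg vc : ℤ) - 1) • g = 0`. -/
theorem stmt_15 {V Γ : Type*} [Fintype V] [DecidableEq V]
    [AddCommGroup Γ] [Infinite Γ]
    (hmixed : (∃ g : Γ, ¬ IsOfFinAddOrder g) ∧ (∃ g : Γ, g ≠ 0 ∧ IsOfFinAddOrder g))
    (T : SimpleGraph V) [DecidableRel T.Adj] (hT : T.IsTree)
    (hdiam : (∀ a b : V, T.dist a b ≤ 4) ∧ ∃ a b : V, T.dist a b = 4)
    (vc : V) (hvc : ∀ u : V, T.dist vc u ≤ 2) :
    (∃ (ℓ : V → Γ) (μ : Γ), (∀ w, ℓ w ≠ 0) ∧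
        ∀ w, ∑ x ∈ T.neighborFinset w, ℓ x = μ) ↔
      ((∀ x : V, T.degree x ≠ 1 →
          ∃ a b : V, a ≠ b ∧ T.Adj x a ∧ T.Adj x b ∧ T.degree a = 1 ∧ T.degree b = 1) ∨
       ((∃! u : V, T.Adj vc u ∧ T.degree u = 1) ∧
        (∀ x : V, x ≠ vc → T.degree x ≠ 1 →
          ∃ a b : V, a ≠ b ∧ T.Adj x a ∧ T.Adj x b ∧ T.degree a = 1 ∧ T.degree b = 1)) ∨
       ((T.degree vc ≠ 1 ∧ ¬ ∃ u : V, T.Adj vc u ∧ T.degree u = 1) ∧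
        (∃ g : Γ, g ≠ 0 ∧ ((T.degree vc : ℤ) - 1) • g = 0))) := by
  classical
  obtain ⟨⟨g₀, hg₀⟩, -⟩ := hmixed
  obtain ⟨p, q, hpq, hp, hq, hpd, hqd⟩ := exists_two_nonpendant hT hvc hdiam.2
  have hdc : T.degree vc ≠ 1 := degree_ne_one_of_two_adj hpq hp hq
  have hm : 1 < (nonpendants T vc).card := Finset.one_lt_card.mpr
    ⟨p, mem_nonpendants.mpr ⟨hp, hpd⟩, q, mem_nonpendants.mpr ⟨hq, hqd⟩, hpq⟩
  have hneutral : (pendants T vc).card = 0 → (nonpendants T vc).card = T.degree vc := by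
    intro h
    have := Finset.card_filter_add_card_filter_not (s := T.neighborFinset vc)
      (fun u => T.degree u = 1)
    rw [SimpleGraph.card_neighborFinset_eq_degree] at this
    change (pendants T vc).card + (nonpendants T vc).card = _ at this
    omega
  have hscalar : ∀ (n : ℕ) (g : Γ), ((n : ℤ) - 1) • g = -(g - n • g) := by
    intro n g
    rw [sub_smul, one_smul, natCast_zsmul]
    abel
  simp only [← one_lt_card_pendants_iff, ← card_pendants_eq_one_iff,
    ← card_pendants_eq_zero_iff]
  constructor
  · rintro ⟨ℓ, μ, hℓ, hw⟩
    have hsupp : ∀ x, (pendants T x).card ≠ 0 → ℓ x = μ := by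
      intro x hx
      obtain ⟨u, hu⟩ := Finset.card_pos.mp (Nat.pos_of_ne_zero hx)
      obtain ⟨hxu, hu⟩ := mem_pendants.mp hu
      obtain ⟨y, hy⟩ := Finset.card_eq_one.mp (show (T.neighborFinset u).card = 1 from hu)
      have hxy : x ∈ T.neighborFinset u := (T.mem_neighborFinset u x).mpr hxu.symm
      rw [hy, Finset.mem_singleton] at hxy
      rw [← hw u, hy, Finset.sum_singleton, hxy]
    have hne0 : ∀ x, x ≠ vc → T.degree x ≠ 1 → (pendants T x).card ≠ 0 := fun x hx hd h =>
      card_pendants_eq_zero_iff.mp h (exists_pendant_neighbor hT hvc hx hd)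
    by_cases hvp : (pendants T vc).card = 0
    · refine Or.inr (Or.inr ⟨⟨hdc, hvp⟩, μ, ?_, ?_⟩)
      · rw [← hsupp p (hne0 p hp.ne' hpd)]
        exact hℓ p
      · have hwc := hw vc
        rw [weight_eq, Finset.card_eq_zero.mp hvp, Finset.sum_empty, zero_add,
          Finset.sum_congr rfl (g := fun _ => μ), Finset.sum_const, hneutral hvp] at hwc
        · rw [hscalar, hwc, sub_self, neg_zero]
        · intro u hu
          obtain ⟨hu, hu'⟩ := mem_nonpendants.mp hu
          exact hsupp u (hne0 u hu.ne' hu')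
    · have hstrong : ∀ x, x ≠ vc → T.degree x ≠ 1 → 1 < (pendants T x).card := by
        intro x hx hd
        have hwx := hw x
        rw [weight_eq, nonpendants_eq_singleton hT hvc hdc hx hd, Finset.sum_singleton,
          hsupp vc hvp, add_eq_right] at hwx
        have h1 : (pendants T x).card ≠ 1 := by
          intro h
          obtain ⟨u, hu⟩ := Finset.card_eq_one.mp h
          rw [hu, Finset.sum_singleton] at hwx
          exact hℓ u hwx
        have := hne0 x hx hd
        omega
      by_cases h1 : (pendants T vc).card = 1
      · exact Or.inr (Or.inl ⟨h1, hstrong⟩)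
      · refine Or.inl fun x hd => ?_
        by_cases hx : x = vc
        · subst hx
          omega
        · exact hstrong x hx hd
  · intro h
    -- An element of infinite order makes the sum required of a single pendant neighbour nonzero.
    have hsupport : (pendants T vc).card ≠ 0 →
        (∀ x, x ≠ vc → T.degree x ≠ 1 → 1 < (pendants T x).card) →
        ∃ (ℓ : V → Γ) (μ : Γ), (∀ w, ℓ w ≠ 0) ∧ ∀ w, ∑ x ∈ T.neighborFinset w, ℓ x = μ := by
      intro hv hstrong
      have hg : g₀ ≠ 0 := by
        rintro rfl
        exact hg₀ IsOfFinAddOrder.zero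
      refine exists_labeling hT hvc hdc g₀ g₀ hg hg (fun _ => rfl) ?_ (fun h => absurd h hv) ?_
      · intro x hx hd h
        have := hstrong x hx hd
        omega
      · intro _ h
        apply hg₀
        obtain ⟨k, hk⟩ := Nat.exists_eq_add_of_lt hm
        refine isOfFinAddOrder_iff_nsmul_eq_zero.mpr ⟨k + 1, Nat.succ_pos k, ?_⟩
        rw [hk, show 1 + k + 1 = (k + 1) + 1 by omega, succ_nsmul, sub_eq_zero] at h
        exact add_eq_right.mp h.symm
    rcases h with h | ⟨h1, h⟩ | ⟨⟨-, h0⟩, g, hg, hgd⟩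
    · exact hsupport (by have := h vc hdc; omega) fun x _ => h x
    · exact hsupport (by omega) h
    · obtain ⟨c, hc⟩ := Infinite.exists_notMem_finset ({0, g} : Finset Γ)
      simp only [Finset.mem_insert, Finset.mem_singleton, not_or] at hc
      refine exists_labeling hT hvc hdc c g hc.1 hg (fun h => absurd h0 h) ?_ ?_ ?_
      · intro x _ _ _
        exact sub_ne_zero.mpr (Ne.symm hc.2)
      · intro _
        rw [hscalar, neg_eq_zero] at hgd
        rw [hneutral h0, hgd]
      · intro h
        omega
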